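/- Let (X, Σ) be a measurable space, p a Markov transition kernel on X, π a probability measure on X, and ρ the probability measure on X × X given by ρ(dx,dy) = π(dx) p(x,dy). Let H be a separable Hilbert space and φ : X → H a bounded measurable map, and define the conditional mean embedding g_p(x) := ∫_X φ(y) p(x,dy) (Bochner integral). Then for every bounded linear operator B : H → H, ∫_{X×X} ‖φ(y) − B φ(x)‖² ρ(dx,dy) = ∫_{X×X} ‖g_p(x) − φ(y)‖² ρ(dx,dy) + ∫_X ‖g_p(x) − B φ(x)‖² π(dx). -/

import Mathlib

open MeasureTheory ProbabilityTheory
open scoped ProbabilityTheory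

/-!
Write `f (x, y)` for `φ y` and `h x` for `B (φ x)`, and let `g x` be the mean of `f (x, ·)` under
the transition kernel `κ x`. The deviation `f (x, ·) - g x` is orthogonal to constants in `L²(κ x)`,
so Pythagoras gives
`∫ ‖f (x, y) - h x‖² κ(x, dy) = ∫ ‖g x - f (x, y)‖² κ(x, dy) + ‖g x - h x‖²`.
Integrate over `x`; the two terms may be integrated separately because averaging along a Markov
kernel is a contraction of `L²`, by Jensen's inequality.
-/

section Fibre

variable {Y E H : Type*} [MeasurableSpace Y] {ν : Measure Y} [IsProbabilityMeasure ν]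
  [NormedAddCommGroup E] [NormedSpace ℝ E]
  [NormedAddCommGroup H] [InnerProductSpace ℝ H] [CompleteSpace H]

theorem norm_integral_rpow_le_integral_norm_rpow {p : ENNReal} {f : Y → E} (hf : MemLp f p ν)
    (hp : 1 ≤ p) (hp_top : p ≠ ⊤) :
    ‖∫ y, f y ∂ν‖ ^ p.toReal ≤ ∫ y, ‖f y‖ ^ p.toReal ∂ν := by
  have one_le_toReal : 1 ≤ p.toReal := by
    simpa using ENNReal.toReal_mono hp_top hp
  calc ‖∫ y, f y ∂ν‖ ^ p.toReal
      ≤ (∫ y, ‖f y‖ ∂ν) ^ p.toReal := by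
        gcongr
        exact norm_integral_le_integral_norm f
    _ ≤ ∫ y, ‖f y‖ ^ p.toReal ∂ν :=
        (convexOn_rpow one_le_toReal).map_integral_le
          (Real.continuous_rpow_const ENNReal.toReal_nonneg).continuousOn isClosed_Ici
          (.of_forall fun y => norm_nonneg (f y)) (hf.integrable hp).norm
          (hf.integrable_norm_rpow (zero_lt_one.trans_le hp).ne' hp_top)

theorem integral_inner_sub_integral_eq_zero {f : Y → H} (hf : Integrable f ν) (c : H) :
    ∫ y, inner ℝ c (f y - ∫ y', f y' ∂ν) ∂ν = 0 := by
  have deviation_integrable : Integrable (fun y => f y - ∫ y', f y' ∂ν) ν :=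
    hf.sub (integrable_const _)
  rw [integral_inner deviation_integrable, integral_sub hf (integrable_const _)]
  simp

theorem integral_norm_sq_eq_integral_norm_sub_integral_sq_add {f : Y → H} (hf : MemLp f 2 ν) :
    ∫ y, ‖f y‖ ^ 2 ∂ν = ∫ y, ‖f y - ∫ y', f y' ∂ν‖ ^ 2 ∂ν + ‖∫ y, f y ∂ν‖ ^ 2 := by
  set m := ∫ y, f y ∂ν
  have f_integrable : Integrable f ν := hf.integrable one_le_two
  have deviation_memLp : MemLp (fun y => f y - m) 2 ν := hf.sub (memLp_const m)
  have cross_integrable : Integrable (fun y => 2 * inner ℝ m (f y - m)) ν :=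
    ((deviation_memLp.integrable one_le_two).const_inner m).const_mul 2
  have affine_integrable : Integrable (fun y => 2 * inner ℝ m (f y - m) + ‖m‖ ^ 2) ν :=
    cross_integrable.add (integrable_const _)
  have expand (y : Y) : ‖f y‖ ^ 2 = ‖f y - m‖ ^ 2 + (2 * inner ℝ m (f y - m) + ‖m‖ ^ 2) := by
    have h := norm_add_sq_real m (f y - m)
    rw [add_sub_cancel] at h
    linarith
  calc ∫ y, ‖f y‖ ^ 2 ∂ν
      = ∫ y, ‖f y - m‖ ^ 2 + (2 * inner ℝ m (f y - m) + ‖m‖ ^ 2) ∂ν := by simp only [expand]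
    _ = ∫ y, ‖f y - m‖ ^ 2 ∂ν + (2 * ∫ y, inner ℝ m (f y - m) ∂ν + ‖m‖ ^ 2) := by
        rw [integral_add (deviation_memLp.integrable_norm_pow two_ne_zero) affine_integrable,
          integral_add cross_integrable (integrable_const _), integral_const_mul]
        simp
    _ = ∫ y, ‖f y - m‖ ^ 2 ∂ν + ‖m‖ ^ 2 := by
        rw [integral_inner_sub_integral_eq_zero f_integrable, mul_zero, zero_add]

end Fibre

section CompProd

variable {X Y E H : Type*} [MeasurableSpace X] [MeasurableSpace Y] {μ : Measure X} [SFinite μ]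
  {κ : Kernel X Y} [NormedAddCommGroup E]
  [NormedAddCommGroup H] [InnerProductSpace ℝ H] [CompleteSpace H]

theorem ae_memLp_of_memLp_compProd [IsSFiniteKernel κ] {p : ENNReal} {u : X × Y → E}
    (hu : MemLp u p (μ ⊗ₘ κ)) (hp_zero : p ≠ 0) (hp_top : p ≠ ⊤) :
    ∀ᵐ x ∂μ, MemLp (fun y => u (x, y)) p (κ x) := by
  have norm_rpow_integrable := hu.integrable_norm_rpow hp_zero hp_top
  filter_upwards [hu.aestronglyMeasurable.ae_of_compProd (f := Function.curry u),
    ((Measure.integrable_compProd_iff norm_rpow_integrable.aestronglyMeasurable).1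
      norm_rpow_integrable).1] with x hx_meas hx_int
  exact (integrable_norm_rpow_iff hx_meas hp_zero hp_top).1 hx_int

theorem measurePreserving_fst_compProd [IsMarkovKernel κ] :
    MeasurePreserving Prod.fst (μ ⊗ₘ κ) μ :=
  ⟨measurable_fst, Measure.fst_compProd μ κ⟩

theorem memLp_integral_of_memLp_compProd [NormedSpace ℝ E] [IsMarkovKernel κ] {p : ENNReal}
    {u : X × Y → E} (hu : MemLp u p (μ ⊗ₘ κ)) (hp : 1 ≤ p) (hp_top : p ≠ ⊤) :
    MemLp (fun x => ∫ y, u (x, y) ∂(κ x)) p μ := by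
  have hp_zero : p ≠ 0 := (zero_lt_one.trans_le hp).ne'
  have mean_meas : AEStronglyMeasurable (fun x => ∫ y, u (x, y) ∂(κ x)) μ := by
    simpa using hu.aestronglyMeasurable.integral_kernel_compProd
  have fibre_integrable : Integrable (fun x => ∫ y, ‖u (x, y)‖ ^ p.toReal ∂(κ x)) μ := by
    simpa using (hu.integrable_norm_rpow hp_zero hp_top).integral_compProd
  rw [← integrable_norm_rpow_iff mean_meas hp_zero hp_top]
  refine fibre_integrable.mono' (mean_meas.norm.aemeasurable.pow_const _).aestronglyMeasurable ?_
  filter_upwards [ae_memLp_of_memLp_compProd hu hp_zero hp_top] with x hx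
  rw [Real.norm_of_nonneg (by positivity)]
  exact norm_integral_rpow_le_integral_norm_rpow hx hp hp_top

theorem integral_compProd_norm_sq_eq_add [IsMarkovKernel κ] {u : X × Y → H}
    (hu : MemLp u 2 (μ ⊗ₘ κ)) :
    ∫ z, ‖u z‖ ^ 2 ∂(μ ⊗ₘ κ)
      = ∫ z, ‖u z - ∫ y, u (z.1, y) ∂(κ z.1)‖ ^ 2 ∂(μ ⊗ₘ κ)
        + ∫ x, ‖∫ y, u (x, y) ∂(κ x)‖ ^ 2 ∂μ := by
  have mean_memLp : MemLp (fun x => ∫ y, u (x, y) ∂(κ x)) 2 μ :=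
    memLp_integral_of_memLp_compProd hu one_le_two ENNReal.ofNat_ne_top
  have deviation_integrable :
      Integrable (fun z => ‖u z - ∫ y, u (z.1, y) ∂(κ z.1)‖ ^ 2) (μ ⊗ₘ κ) :=
    (hu.sub (mean_memLp.comp_measurePreserving
      measurePreserving_fst_compProd)).integrable_norm_pow two_ne_zero
  have variance_integrable :
      Integrable (fun x => ∫ y, ‖u (x, y) - ∫ y', u (x, y') ∂(κ x)‖ ^ 2 ∂(κ x)) μ := by
    simpa using deviation_integrable.integral_compProd
  rw [Measure.integral_compProd (hu.integrable_norm_pow two_ne_zero),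
    Measure.integral_compProd deviation_integrable,
    ← integral_add variance_integrable (mean_memLp.integrable_norm_pow two_ne_zero)]
  refine integral_congr_ae ?_
  filter_upwards [ae_memLp_of_memLp_compProd hu two_ne_zero ENNReal.ofNat_ne_top] with x hx
  exact integral_norm_sq_eq_integral_norm_sub_integral_sq_add hx

theorem stmt9_general [IsMarkovKernel κ] {f : X × Y → H} {h : X → H}
    (hfh : MemLp (fun z => f z - h z.1) 2 (μ ⊗ₘ κ)) :
    ∫ z, ‖f z - h z.1‖ ^ 2 ∂(μ ⊗ₘ κ)
      = ∫ z, ‖(∫ y, f (z.1, y) ∂(κ z.1)) - f z‖ ^ 2 ∂(μ ⊗ₘ κ)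
        + ∫ x, ‖(∫ y, f (x, y) ∂(κ x)) - h x‖ ^ 2 ∂μ := by
  have mean_sub : ∀ᵐ x ∂μ, ∫ y, f (x, y) - h x ∂(κ x) = (∫ y, f (x, y) ∂(κ x)) - h x := by
    filter_upwards [ae_memLp_of_memLp_compProd hfh two_ne_zero ENNReal.ofNat_ne_top] with x hx
    have f_integrable : Integrable (fun y => f (x, y)) (κ x) := by
      simpa only [Pi.add_def, sub_add_cancel] using
        (hx.integrable one_le_two).add (integrable_const (h x))
    simp [integral_sub f_integrable (integrable_const (h x))]
  rw [integral_compProd_norm_sq_eq_add hfh]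
  congr 1
  · refine integral_congr_ae ?_
    filter_upwards [measurePreserving_fst_compProd.quasiMeasurePreserving.ae mean_sub] with z hz
    rw [hz, sub_sub_sub_cancel_right, norm_sub_rev]
  · refine integral_congr_ae ?_
    filter_upwards [mean_sub] with x hx
    rw [hx]

end CompProd

/-- For a Markov kernel `p`, a probability measure `π`,
`ρ(dx,dy) = π(dx)p(x,dy)`, a bounded measurable feature map `φ : X → H` into a separable
Hilbert space, and the conditional mean embedding `g_p(x) = ∫ φ(y) p(x,dy)`, for every
bounded operator `B : H → H`:
`∫ ‖φ(y) − B φ(x)‖² dρ = ∫ ‖g_p(x) − φ(y)‖² dρ + ∫ ‖g_p(x) − B φ(x)‖² dπ`. -/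
theorem stmt9 {X : Type*} [MeasurableSpace X]
    (p : Kernel X X) [IsMarkovKernel p]
    (π : Measure X) [IsProbabilityMeasure π]
    {H : Type*} [NormedAddCommGroup H] [InnerProductSpace ℝ H] [CompleteSpace H]
    [TopologicalSpace.SeparableSpace H] [MeasurableSpace H] [BorelSpace H]
    (φ : X → H) (hφm : Measurable φ) (C : ℝ) (hφb : ∀ x, ‖φ x‖ ≤ C)
    (B : H →L[ℝ] H) :
    ∫ z : X × X, ‖φ z.2 - B (φ z.1)‖ ^ 2 ∂(π ⊗ₘ p)
      = ∫ z : X × X, ‖(∫ y, φ y ∂(p z.1)) - φ z.2‖ ^ 2 ∂(π ⊗ₘ p)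
        + ∫ x, ‖(∫ y, φ y ∂(p x)) - B (φ x)‖ ^ 2 ∂π := by
  have hφ_comp {q : X × X → X} (hq : Measurable q) : MemLp (fun z => φ (q z)) 2 (π ⊗ₘ p) :=
    .of_bound (hφm.stronglyMeasurable.comp_measurable hq).aestronglyMeasurable C
      (.of_forall fun z => hφb (q z))
  exact stmt9_general (f := fun z => φ z.2) (h := fun x => B (φ x))
    ((hφ_comp measurable_snd).sub (B.comp_memLp' (hφ_comp measurable_fst)))
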